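/- (Rank-deficiency propagation.) Consider x(t+1) = A x(t) + B u(t) with (A,B) controllable, and fix L ≥ 1, t ≥ L. Suppose (x(t−L+1), u(t−L+1),...,u(t−1)) ∈ im [H₁(x_{[0,t−L]}); H_{L−1}(u_{[0,t−2]})] and that the left kernel of [H₁(x_{[0,t−L]}); H_L(u_{[0,t−1]})] equals (left kernel of [H₁(x_{[0,t−L]}); H_{L−1}(u_{[0,t−2]})]) × {0_m}. Then for every i = 1,...,L, the left kernel of [H₁(x_{[0,t−L]}); H_L(u_{[0,t−1]})] equals (left kernel of [H₁(x_{[0,t−L]}); H_{L−i}(u_{[0,t−i−1]})]) × {0_{im}} (where for i = L the latter is left kernel of H₁(x_{[0,t−L]}) × {0_{mL}}). -/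

import Mathlib

open Matrix

/-- Stacked Hankel matrix [H₁(x_{[a, a+c−1]}); H_d(u_{[a, a+c+d−2]})]. -/
noncomputable def stackedHankel {n m : ℕ} (x : ℕ → Fin n → ℝ) (u : ℕ → Fin m → ℝ)
    (a d c : ℕ) : Matrix (Fin n ⊕ (Fin d × Fin m)) (Fin c) ℝ :=
  Matrix.of fun i s =>
    match i with
    | Sum.inl i => x (a + (s : ℕ)) i
    | Sum.inr (r, j) => u (a + (s : ℕ) + (r : ℕ)) j

/-!
Let `N` be the left kernel of the depth `L + 1` matrix with columns starting at times
`a, …, a + c - 1`. Its vectors have vanishing last input block, so the membership hypothesis makes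
them annihilate the window starting at `a + c` as well. Expressing `x(s + 1)` through `x(s)` and
`u(s)` then shows that `N` is invariant under
`(ξ, η₀, …, η_L) ↦ (ξ A, ξ B, η₀, …, η_{L-1})`, which moves each input block one place further.
Iterating this map brings every block into the last position, where it vanishes: vectors in `N`
have no input part at all.
-/

section

variable {R ι κ : Type*}

/-- The window `(x(s), u(s), …, u(s + d - 1))` of depth `d`: the state at time `s` on top of the
next `d` inputs. -/
def stackedWindow (x : ℕ → ι → R) (u : ℕ → κ → R) (d s : ℕ) : ι ⊕ (Fin d × κ) → R
  | Sum.inl i => x s i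
  | Sum.inr (r, j) => u (s + r) j

/-- The matrix whose `c` columns are the windows of depth `d` starting at `a, …, a + c - 1`; this
is `stackedHankel` with arbitrary entries and index types. -/
def windowMatrix (x : ℕ → ι → R) (u : ℕ → κ → R) (a d c : ℕ) :
    Matrix (ι ⊕ (Fin d × κ)) (Fin c) R :=
  Matrix.of fun i s => stackedWindow x u d (a + s) i

/-- The restriction of a row vector `(ξ, η₀, …, η_{e-1})` to its first blocks
`(ξ, η₀, …, η_{d-1})`. -/
def truncateInputs {d e : ℕ} (h : d ≤ e) (v : ι ⊕ (Fin e × κ) → R) : ι ⊕ (Fin d × κ) → R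
  | Sum.inl i => v (Sum.inl i)
  | Sum.inr (r, j) => v (Sum.inr (Fin.castLE h r, j))

/-- The pullback `(ξ A, ξ B, η₀, …, η_{d-1})` of a row vector `(ξ, η₀, …, η_{d-1})` along one step
of the system `x(s + 1) = A x(s) + B u(s)`. -/
def pullbackStep [NonUnitalSemiring R] [Fintype ι] (A : Matrix ι ι R) (B : Matrix ι κ R) {d : ℕ}
    (v : ι ⊕ (Fin d × κ) → R) : ι ⊕ (Fin (d + 1) × κ) → R
  | Sum.inl i => ((v ∘ Sum.inl) ᵥ* A) i
  | Sum.inr (r, j) =>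
      Fin.cons (α := fun _ => R) (((v ∘ Sum.inl) ᵥ* B) j) (fun q => v (Sum.inr (q, j))) r

variable [NonUnitalSemiring R] [Fintype ι] [Fintype κ]

theorem dotProduct_stackedWindow (x : ℕ → ι → R) (u : ℕ → κ → R) {d : ℕ} (s : ℕ)
    (v : ι ⊕ (Fin d × κ) → R) :
    v ⬝ᵥ stackedWindow x u d s =
      (v ∘ Sum.inl) ⬝ᵥ x s + ∑ r : Fin d, (fun j => v (Sum.inr (r, j))) ⬝ᵥ u (s + r) := by
  simp only [dotProduct, Fintype.sum_sum_type, Fintype.sum_prod_type, stackedWindow,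
    Function.comp_apply]

theorem truncateInputs_dotProduct_stackedWindow (x : ℕ → ι → R) (u : ℕ → κ → R) {d e : ℕ}
    (h : d ≤ e) (s : ℕ) {v : ι ⊕ (Fin e × κ) → R}
    (hv : ∀ r : Fin e, d ≤ (r : ℕ) → ∀ j, v (Sum.inr (r, j)) = 0) :
    truncateInputs h v ⬝ᵥ stackedWindow x u d s = v ⬝ᵥ stackedWindow x u e s := by
  obtain ⟨k, rfl⟩ := Nat.exists_eq_add_of_le h
  have htail (q : Fin k) : (fun j => v (Sum.inr (Fin.natAdd d q, j))) = 0 :=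
    funext (hv _ (Nat.le_add_right d q))
  rw [dotProduct_stackedWindow, dotProduct_stackedWindow, Fin.sum_univ_add]
  simp only [htail, zero_dotProduct, Finset.sum_const_zero, add_zero]
  rfl

theorem pullbackStep_dotProduct_stackedWindow {A : Matrix ι ι R} {B : Matrix ι κ R}
    {x : ℕ → ι → R} {u : ℕ → κ → R} {s : ℕ} (hx : x (s + 1) = A *ᵥ x s + B *ᵥ u s) {d : ℕ}
    (v : ι ⊕ (Fin d × κ) → R) :
    pullbackStep A B v ⬝ᵥ stackedWindow x u (d + 1) s = v ⬝ᵥ stackedWindow x u d (s + 1) := by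
  have hinputs : ∑ r : Fin (d + 1), (fun j => pullbackStep A B v (Sum.inr (r, j))) ⬝ᵥ u (s + r) =
      ((v ∘ Sum.inl) ᵥ* B) ⬝ᵥ u s +
        ∑ r : Fin d, (fun j => v (Sum.inr (r, j))) ⬝ᵥ u (s + 1 + r) := by
    simp only [Fin.sum_univ_succ, pullbackStep, Fin.cons_zero, Fin.cons_succ, Fin.val_zero,
      Fin.val_succ, add_zero, add_assoc, add_comm 1]
  rw [dotProduct_stackedWindow, dotProduct_stackedWindow, hinputs, hx, dotProduct_add,
    dotProduct_mulVec, dotProduct_mulVec, add_assoc]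
  rfl

theorem truncateInputs_vecMul_windowMatrix (x : ℕ → ι → R) (u : ℕ → κ → R) (a c : ℕ) {d e : ℕ}
    (h : d ≤ e) {v : ι ⊕ (Fin e × κ) → R}
    (hv : ∀ r : Fin e, d ≤ (r : ℕ) → ∀ j, v (Sum.inr (r, j)) = 0) :
    truncateInputs h v ᵥ* windowMatrix x u a d c = v ᵥ* windowMatrix x u a e c :=
  funext fun s => truncateInputs_dotProduct_stackedWindow x u h (a + s) hv

theorem pullbackStep_vecMul_windowMatrix {A : Matrix ι ι R} {B : Matrix ι κ R}
    {x : ℕ → ι → R} {u : ℕ → κ → R} (hx : ∀ s, x (s + 1) = A *ᵥ x s + B *ᵥ u s) (a c : ℕ) {d : ℕ}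
    (v : ι ⊕ (Fin d × κ) → R) :
    pullbackStep A B v ᵥ* windowMatrix x u a (d + 1) c = v ᵥ* windowMatrix x u (a + 1) d c := by
  funext s
  have hstep := pullbackStep_dotProduct_stackedWindow (hx (a + s)) v
  rwa [Nat.add_right_comm] at hstep

theorem vecMul_windowMatrix_succ_eq_zero {x : ℕ → ι → R} {u : ℕ → κ → R} {a d c : ℕ}
    (hnext : stackedWindow x u d (a + c) ∈ Set.range (windowMatrix x u a d c).mulVec)
    {v : ι ⊕ (Fin d × κ) → R} (hv : v ᵥ* windowMatrix x u a d c = 0) :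
    v ᵥ* windowMatrix x u (a + 1) d c = 0 := by
  have hlast : v ⬝ᵥ stackedWindow x u d (a + c) = 0 := by
    obtain ⟨g, hg⟩ := hnext
    rw [← hg, dotProduct_mulVec, hv, zero_dotProduct]
  funext s
  change v ⬝ᵥ stackedWindow x u d (a + 1 + s) = 0
  rw [Nat.add_right_comm, Nat.add_assoc]
  obtain hs | hs := (Nat.succ_le_of_lt s.isLt).lt_or_eq
  · exact congrFun hv ⟨s + 1, hs⟩
  · rwa [← hs] at hlast

theorem input_eq_zero_of_vecMul_windowMatrix_eq_zero {A : Matrix ι ι R} {B : Matrix ι κ R}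
    {x : ℕ → ι → R} {u : ℕ → κ → R} (hx : ∀ s, x (s + 1) = A *ᵥ x s + B *ᵥ u s) {a L c : ℕ}
    (hnext : stackedWindow x u L (a + c) ∈ Set.range (windowMatrix x u a L c).mulVec)
    (hker : ∀ v, v ᵥ* windowMatrix x u a (L + 1) c = 0 → ∀ j, v (Sum.inr (Fin.last L, j)) = 0)
    {v : ι ⊕ (Fin (L + 1) × κ) → R} (hv : v ᵥ* windowMatrix x u a (L + 1) c = 0)
    (r : Fin (L + 1)) (j : κ) : v (Sum.inr (r, j)) = 0 := by
  induction r using Fin.reverseInduction generalizing v with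
  | last => exact hker v hv j
  | cast _ ih =>
    have htail (q : Fin (L + 1)) (hq : L ≤ q) (j : κ) : v (Sum.inr (q, j)) = 0 :=
      Fin.last_le_iff.1 hq ▸ hker v hv j
    have htrunc : truncateInputs L.le_succ v ᵥ* windowMatrix x u a L c = 0 :=
      (truncateInputs_vecMul_windowMatrix x u a c L.le_succ htail).trans hv
    have hpull : pullbackStep A B (truncateInputs L.le_succ v) ᵥ*
        windowMatrix x u a (L + 1) c = 0 :=
      (pullbackStep_vecMul_windowMatrix hx a c _).trans
        (vecMul_windowMatrix_succ_eq_zero hnext htrunc)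
    exact ih hpull

theorem stmt10_general {A : Matrix ι ι R} {B : Matrix ι κ R}
    {x : ℕ → ι → R} {u : ℕ → κ → R} (hx : ∀ s, x (s + 1) = A *ᵥ x s + B *ᵥ u s) {a L c : ℕ}
    (hnext : stackedWindow x u L (a + c) ∈ Set.range (windowMatrix x u a L c).mulVec)
    (hker : ∀ v, v ᵥ* windowMatrix x u a (L + 1) c = 0 → ∀ j, v (Sum.inr (Fin.last L, j)) = 0)
    {d : ℕ} (hd : d ≤ L + 1) (v : ι ⊕ (Fin (L + 1) × κ) → R) :
    v ᵥ* windowMatrix x u a (L + 1) c = 0 ↔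
      truncateInputs hd v ᵥ* windowMatrix x u a d c = 0 ∧
        ∀ r : Fin (L + 1), d ≤ (r : ℕ) → ∀ j, v (Sum.inr (r, j)) = 0 := by
  constructor
  · intro hv
    have hzero (r : Fin (L + 1)) (_hr : d ≤ (r : ℕ)) (j : κ) : v (Sum.inr (r, j)) = 0 :=
      input_eq_zero_of_vecMul_windowMatrix_eq_zero hx hnext hker hv r j
    exact ⟨(truncateInputs_vecMul_windowMatrix x u a c hd hzero).trans hv, hzero⟩
  · rintro ⟨hv, hzero⟩
    exact (truncateInputs_vecMul_windowMatrix x u a c hd hzero).symm.trans hv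

end

theorem stackedHankel_eq_windowMatrix {n m : ℕ} (x : ℕ → Fin n → ℝ) (u : ℕ → Fin m → ℝ)
    (a d c : ℕ) : stackedHankel x u a d c = windowMatrix x u a d c := by
  ext (i | ⟨r, j⟩) s <;> rfl

/-- Rank-deficiency propagation: if (x(t−L+1), u(t−L+1),…,u(t−1)) lies in the image of
[H₁(x_{[0,t−L]}); H_{L−1}(u_{[0,t−2]})] and the left kernel of [H₁(x_{[0,t−L]}); H_L(u_{[0,t−1]})]
equals (left kernel of [H₁(x_{[0,t−L]}); H_{L−1}(u_{[0,t−2]})]) × {0_m}, then for every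
i = 1,…,L the left kernel of [H₁(x_{[0,t−L]}); H_L(u_{[0,t−1]})] equals
(left kernel of [H₁(x_{[0,t−L]}); H_{L−i}(u_{[0,t−i−1]})]) × {0_{im}}. -/
theorem stmt10 {n m : ℕ} (A : Matrix (Fin n) (Fin n) ℝ) (B : Matrix (Fin n) (Fin m) ℝ)
    (hctrb : (⨆ i : Fin n, LinearMap.range ((A ^ (i : ℕ) * B).mulVecLin)) = ⊤)
    (L t : ℕ) (hL : 1 ≤ L) (hLt : L ≤ t)
    (x : ℕ → Fin n → ℝ) (u : ℕ → Fin m → ℝ)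
    (htraj : ∀ s, x (s + 1) = A.mulVec (x s) + B.mulVec (u s))
    (hmem : (fun i : Fin n ⊕ (Fin (L - 1) × Fin m) =>
        match i with
        | Sum.inl i => x (t - L + 1) i
        | Sum.inr (r, j) => u (t - L + 1 + (r : ℕ)) j) ∈
      LinearMap.range (stackedHankel x u 0 (L - 1) (t - L + 1)).mulVecLin)
    (hker1 : ∀ v : Fin n ⊕ (Fin L × Fin m) → ℝ,
      v ᵥ* stackedHankel x u 0 L (t - L + 1) = 0 ↔
      ((fun p : Fin n ⊕ (Fin (L - 1) × Fin m) =>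
          match p with
          | Sum.inl q => v (Sum.inl q)
          | Sum.inr (r, j) => v (Sum.inr (Fin.castLE (Nat.sub_le L 1) r, j))) ᵥ*
            stackedHankel x u 0 (L - 1) (t - L + 1) = 0 ∧
        ∀ r : Fin L, L - 1 ≤ (r : ℕ) → ∀ j, v (Sum.inr (r, j)) = 0)) :
    ∀ i, 1 ≤ i → i ≤ L → ∀ v : Fin n ⊕ (Fin L × Fin m) → ℝ,
      v ᵥ* stackedHankel x u 0 L (t - L + 1) = 0 ↔
      ((fun p : Fin n ⊕ (Fin (L - i) × Fin m) =>
          match p with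
          | Sum.inl q => v (Sum.inl q)
          | Sum.inr (r, j) => v (Sum.inr (Fin.castLE (Nat.sub_le L i) r, j))) ᵥ*
            stackedHankel x u 0 (L - i) (t - L + 1) = 0 ∧
        ∀ r : Fin L, L - i ≤ (r : ℕ) → ∀ j, v (Sum.inr (r, j)) = 0) := by
  obtain ⟨k, rfl⟩ := Nat.exists_eq_add_of_le' hL
  simp only [stackedHankel_eq_windowMatrix] at hmem hker1 ⊢
  have hnext : stackedWindow x u k (0 + (t - (k + 1) + 1)) ∈
      Set.range (windowMatrix x u 0 k (t - (k + 1) + 1)).mulVec := by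
    obtain ⟨g, hg⟩ := hmem
    refine ⟨g, hg.trans ?_⟩
    ext (q | ⟨r, j⟩) <;> simp only [stackedWindow, Nat.zero_add]
  have hlast w hw := ((hker1 w).1 hw).2 (Fin.last k) le_rfl
  intro i _ _ v
  refine (stmt10_general htraj hnext hlast (Nat.sub_le (k + 1) i) v).trans
    (and_congr_left fun _ => Eq.congr_left (congrArg (· ᵥ* _) ?_))
  ext (q | ⟨r, j⟩) <;> rfl
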